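/- Let B be a supersoluble brace such that U_2^+(B) = {0}, i.e. (B,+) has no nonzero element of finite odd order. Then B/Fit(B) is finite of order a power of 2. -/

import Mathlib

/-- A (skew left) brace: a set with an additive group structure (not necessarily abelian)
and a multiplicative group structure sharing the same identity, satisfying the skew
distributive law `a * (b + c) = a * b + -a + a * c`. -/
class SkewBrace (B : Type*) extends AddGroup B, Group B where
  one_eq_zero : (1 : B) = (0 : B)
  skew_distrib : ∀ a b c : B, a * (b + c) = a * b + -a + a * c

/-- A group is supersoluble if it has a finite chain of normal subgroups with all
factors cyclic. -/
def Group.IsSupersoluble (G : Type*) [Group G] : Prop :=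
  ∃ (n : ℕ) (H : ℕ → Subgroup G),
    H 0 = ⊥ ∧ H n = ⊤ ∧ (∀ i, (H i).Normal) ∧ (∀ i, i < n → H i ≤ H (i + 1)) ∧
    ∀ i, i < n → ∃ x ∈ H (i + 1), ∀ y ∈ H (i + 1), ∃ k : ℤ, (x ^ k)⁻¹ * y ∈ H i

namespace SkewBrace

variable {B : Type*} [SkewBrace B]

/-- `lam a b = -a + a * b`, i.e. `λ_a(b)`. -/
def lam (a b : B) : B := -a + a * b

/-- the star operation `a ∗ b = λ_a(b) - b`. -/
def starOp (a b : B) : B := lam a b + -b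

/-- the additive commutator `[a,b]_+`. -/
def addCommutator (a b : B) : B := -a + -b + a + b

/-- A subbrace of `B`: a subset that is a subgroup of both `(B,+)` and `(B,·)`. -/
structure Subbrace (B : Type*) [SkewBrace B] where
  carrier : Set B
  zero_mem : (0 : B) ∈ carrier
  add_mem : ∀ {a b : B}, a ∈ carrier → b ∈ carrier → a + b ∈ carrier
  neg_mem : ∀ {a : B}, a ∈ carrier → -a ∈ carrier
  mul_mem : ∀ {a b : B}, a ∈ carrier → b ∈ carrier → a * b ∈ carrier
  inv_mem : ∀ {a : B}, a ∈ carrier → a⁻¹ ∈ carrier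

/-- An ideal of `B`: a subbrace that is normal in `(B,+)` and in `(B,·)` and is
invariant under all the maps `λ_b`. -/
structure BraceIdeal (B : Type*) [SkewBrace B] extends Subbrace B where
  addConj_mem : ∀ (b : B) {a : B}, a ∈ carrier → b + a + -b ∈ carrier
  mulConj_mem : ∀ (b : B) {a : B}, a ∈ carrier → b * a * b⁻¹ ∈ carrier
  lam_mem : ∀ (b : B) {a : B}, a ∈ carrier → lam b a ∈ carrier

/-- The additive subgroup underlying a subbrace. -/
def Subbrace.addSubgroup (S : Subbrace B) : AddSubgroup B where
  carrier := S.carrier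
  zero_mem' := S.zero_mem
  add_mem' := S.add_mem
  neg_mem' := S.neg_mem

/-- The multiplicative subgroup underlying a subbrace. -/
def Subbrace.subgroup (S : Subbrace B) : Subgroup B where
  carrier := S.carrier
  one_mem' := by rw [one_eq_zero]; exact S.zero_mem
  mul_mem' := S.mul_mem
  inv_mem' := S.inv_mem

/-- Given ideals `J ≤ I` of `B`, `MemSocQuotRel I J x` says that the coset of `x`
lies in `Soc(I/J) = Ker(λ) ∩ Z(I/J, +)` (for `I = B` take `I = Set.univ`). -/
def MemSocQuotRel (I J : Set B) (x : B) : Prop :=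
  x ∈ I ∧ (∀ y ∈ I, -y + lam x y ∈ J) ∧ ∀ y ∈ I, -(y + x) + (x + y) ∈ J

/-- Given ideals `J ≤ I` of `B`, `MemZetaQuotRel I J x` says that the coset of `x`
lies in `ζ(I/J) = Soc(I/J) ∩ Z(I/J, ·)`. -/
def MemZetaQuotRel (I J : Set B) (x : B) : Prop :=
  MemSocQuotRel I J x ∧ ∀ y ∈ I, (y * x)⁻¹ * (x * y) ∈ J

/-- The coset of `x` lies in `Soc(B/J)`. -/
def MemSocQuot (J : Set B) (x : B) : Prop := MemSocQuotRel Set.univ J x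

/-- The coset of `x` lies in `ζ(B/J)`. -/
def MemZetaQuot (J : Set B) (x : B) : Prop := MemZetaQuotRel Set.univ J x

/-- For ideals `I ≤ J`, the additive group of the quotient `J/I` is infinite cyclic. -/
def QuotAddInfCyclic (I J : Set B) : Prop :=
  ∃ x ∈ J, (∀ y ∈ J, ∃ n : ℤ, -(n • x) + y ∈ I) ∧ ∀ n : ℤ, n • x ∈ I → n = 0

/-- For ideals `I ≤ J`, the quotient `J/I` has prime order `p`. -/
def QuotPrimeOrder (I J : Set B) (p : ℕ) : Prop :=
  p.Prime ∧ ∃ x ∈ J, x ∉ I ∧ p • x ∈ I ∧ ∀ y ∈ J, ∃ n : ℤ, -(n • x) + y ∈ I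

/-- A brace is supersoluble if it has a finite chain of ideals each factor of which
either is additively infinite cyclic and contained in the socle of the corresponding
quotient, or has prime order. -/
def IsSupersoluble (B : Type*) [SkewBrace B] : Prop :=
  ∃ (n : ℕ) (I : ℕ → BraceIdeal B),
    (I 0).carrier = {0} ∧ (I n).carrier = Set.univ ∧
    (∀ i, i < n → (I i).carrier ⊆ (I (i + 1)).carrier) ∧
    ∀ i, i < n →
      (QuotAddInfCyclic (I i).carrier (I (i + 1)).carrier ∧
        ∀ x ∈ (I (i + 1)).carrier, MemSocQuot (I i).carrier x) ∨
      ∃ p : ℕ, QuotPrimeOrder (I i).carrier (I (i + 1)).carrier p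

/-- The upper socle series of the brace (carrier of the ideal) `I`. -/
def socChainRel (I : Set B) : ℕ → Set B
  | 0 => {0}
  | n + 1 => {x | MemSocQuotRel I (socChainRel I n) x}

/-- The upper central series of the brace (carrier of the ideal) `I`. -/
def zetaChainRel (I : Set B) : ℕ → Set B
  | 0 => {0}
  | n + 1 => {x | MemZetaQuotRel I (zetaChainRel I n) x}

/-- The upper socle series `Soc_n(B)` of `B`. -/
def socChain (B : Type*) [SkewBrace B] : ℕ → Set B := socChainRel Set.univ

/-- The upper central series `ζ_n(B)` of `B`. -/
def zetaChain (B : Type*) [SkewBrace B] : ℕ → Set B := zetaChainRel Set.univ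

/-- A brace is centrally nilpotent if its upper central series reaches `B`. -/
def IsCentrallyNilpotent (B : Type*) [SkewBrace B] : Prop :=
  ∃ m : ℕ, zetaChain B m = Set.univ

end SkewBrace

namespace SkewBrace

/-- An ideal `I` of `B` is `B`-centrally nilpotent if there is a finite chain
`{0} = J 0 ≤ … ≤ J n = I` of ideals of `B` whose factors are central in `I`. -/
def IsBCentrallyNilpotent {B : Type*} [SkewBrace B] (I : BraceIdeal B) : Prop :=
  ∃ (n : ℕ) (J : ℕ → BraceIdeal B),
    (J 0).carrier = {0} ∧ (J n).carrier = I.carrier ∧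
    (∀ j, j < n → (J j).carrier ⊆ (J (j + 1)).carrier) ∧
    ∀ j, j < n → ∀ x ∈ (J (j + 1)).carrier,
      MemZetaQuotRel I.carrier (J j).carrier x

/-- The Fitting ideal `Fit(B)`: the sum of all `B`-centrally nilpotent ideals of `B`,
i.e. the additive subgroup generated by their union. -/
def fitAdd (B : Type*) [SkewBrace B] : AddSubgroup B :=
  AddSubgroup.closure
    (⋃ I ∈ {I : BraceIdeal B | IsBCentrallyNilpotent I}, I.carrier)

end SkewBrace

/-!
A chain of ideals is handled as a tower of surjections with additively cyclic kernels. A factor of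
odd prime order can be moved below a factor of order `2`, and below an infinite factor of the socle
unless the two merge into one infinite factor. So the odd factors may be assumed to lie at the
bottom, where they would contain elements of odd additive order; hence there are none. Infinite
factors move below factors of order `2` too, once their generator is replaced by its fourfold.

Thus either `B` is finite of order a power of `2`, or it has an ideal `⟨x⟩ ≤ Soc(B)` with `x` of
infinite order. On `⟨x⟩` the maps `λ_b` act by signs, so all squares stabilize `x`. As `2z = z²` for
`z` in the socle, replacing infinite factors by factors of order `2` shows that every multiplicative
subgroup containing all squares contains an ideal of `2`-power index. Intersecting the ideals
obtained in this way from all infinite factors gives a `B`-centrally nilpotent ideal of `2`-power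
index, and `Fit(B)` contains it.
-/

namespace SkewBrace

universe u

section Lam

variable {B : Type*} [SkewBrace B]

theorem mul_eq_add_lam (a b : B) : a * b = a + lam a b := by
  simp only [lam, add_neg_cancel_left]

theorem lam_add (a b c : B) : lam a (b + c) = lam a b + lam a c := by
  simp only [lam, skew_distrib, add_assoc]

theorem one_lam (b : B) : lam 1 b = b := by
  rw [lam, one_mul, one_eq_zero, neg_zero, zero_add]

theorem zero_lam (b : B) : lam 0 b = b := by
  rw [← one_eq_zero, one_lam]

theorem mul_lam (a b c : B) : lam (a * b) c = lam a (lam b c) := by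
  have h : a * b + lam (a * b) c = a * b + lam a (lam b c) := by
    rw [← mul_eq_add_lam, mul_assoc, mul_eq_add_lam b c, mul_eq_add_lam a, lam_add, ← add_assoc,
      ← mul_eq_add_lam]
  exact add_left_cancel h

/-- The homomorphism `λ : (B, ·) → End(B, +)`. -/
def lamHom : B →* AddMonoid.End B where
  toFun a := AddMonoidHom.mk' (lam a) (lam_add a)
  map_one' := AddMonoidHom.ext one_lam
  map_mul' a b := AddMonoidHom.ext (mul_lam a b)

theorem lam_zero (a : B) : lam a 0 = 0 := map_zero (lamHom a)

theorem lam_neg (a b : B) : lam a (-b) = -lam a b := map_neg (lamHom a) b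

theorem lam_nsmul (a : B) (n : ℕ) (b : B) : lam a (n • b) = n • lam a b := map_nsmul (lamHom a) n b

theorem lam_zsmul (a : B) (n : ℤ) (b : B) : lam a (n • b) = n • lam a b := map_zsmul (lamHom a) n b

theorem inv_lam_lam (a b : B) : lam a⁻¹ (lam a b) = b := by
  rw [← mul_lam, inv_mul_cancel, one_lam]

theorem lam_inv_lam (a b : B) : lam a (lam a⁻¹ b) = b := by
  rw [← mul_lam, mul_inv_cancel, one_lam]

theorem add_eq_mul_lam (a b : B) : a + b = a * lam a⁻¹ b := by
  rw [mul_eq_add_lam, lam_inv_lam]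

theorem inv_eq_neg_lam (a : B) : a⁻¹ = -lam a⁻¹ a := by
  rw [eq_neg_iff_add_eq_zero, ← mul_eq_add_lam, inv_mul_cancel, one_eq_zero]

theorem pow_lam_of_lam_eq_add {k b c : B} (hb : lam k b = b + c) (hc : lam k c = c) (n : ℕ) :
    lam (k ^ n) b = b + n • c := by
  induction n with
  | zero => rw [pow_zero, one_lam, zero_nsmul, add_zero]
  | succ n ih => rw [pow_succ', mul_lam, ih, lam_add, lam_nsmul, hb, hc, succ_nsmul', add_assoc]

/-- The stabilizer of `x` under the action `λ` of `(B, ·)` on `B`. -/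
def lamStabilizer (x : B) : Subgroup B where
  carrier := {b | lam b x = x}
  one_mem' := one_lam x
  mul_mem' {a b} ha hb := by
    rw [Set.mem_ofPred_eq] at ha hb ⊢
    rw [mul_lam, hb, ha]
  inv_mem' {a} ha := by
    rw [Set.mem_ofPred_eq] at ha ⊢
    conv_lhs => rw [← ha, inv_lam_lam]

theorem mem_lamStabilizer {b x : B} : b ∈ lamStabilizer x ↔ lam b x = x := Iff.rfl

end Lam

section Socle

variable {B : Type*} [SkewBrace B]

/-- The socle `Soc(B) = Ker(λ) ∩ Z(B, +)`, as an additive subgroup. -/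
def socle (B : Type*) [SkewBrace B] : AddSubgroup B where
  carrier := {z | (∀ b, lam z b = b) ∧ z ∈ AddSubgroup.center B}
  zero_mem' := ⟨zero_lam, zero_mem _⟩
  add_mem' {a b} ha hb := by
    refine ⟨fun c => ?_, add_mem ha.2 hb.2⟩
    rw [add_eq_mul_lam, mul_lam, ← ha.1 (lam a⁻¹ b), lam_inv_lam, hb.1, ha.1]
  neg_mem' {a} ha := by
    have hinv : ∀ c, lam a⁻¹ c = c := fun c => by
      conv_lhs => rw [← ha.1 c, inv_lam_lam]
    refine ⟨fun c => ?_, neg_mem ha.2⟩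
    rw [← hinv a, ← inv_eq_neg_lam, hinv]

variable {z : B}

theorem lam_of_mem_socle (hz : z ∈ socle B) (b : B) : lam z b = b := hz.1 b

theorem addCommute_of_mem_socle (hz : z ∈ socle B) (b : B) : AddCommute z b :=
  (AddSubgroup.mem_center_iff.1 hz.2 b).symm

theorem mem_socle_iff : z ∈ socle B ↔ (∀ b, lam z b = b) ∧ ∀ b, AddCommute z b :=
  and_congr_right fun _ => AddSubgroup.mem_center_iff.trans (forall_congr' fun _ => eq_comm)

theorem mul_eq_add_of_mem_socle (hz : z ∈ socle B) (b : B) : z * b = z + b := by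
  rw [mul_eq_add_lam, lam_of_mem_socle hz]

theorem pow_eq_nsmul_of_mem_socle (hz : z ∈ socle B) (n : ℕ) : z ^ n = n • z := by
  induction n with
  | zero => rw [pow_zero, zero_nsmul, one_eq_zero]
  | succ n ih => rw [pow_succ', ih, mul_eq_add_of_mem_socle hz, succ_nsmul']

theorem commute_of_mem_socle_of_lam_eq (hz : z ∈ socle B) {b : B} (hb : lam b z = z) :
    Commute b z := by
  rw [commute_iff_eq, mul_eq_add_lam, hb, mul_eq_add_of_mem_socle hz,
    addCommute_of_mem_socle hz b]

end Socle

section Ideal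

variable {B : Type*} [SkewBrace B]

/-- The subbrace carried by a `λ`-invariant additive subgroup. -/
def Subbrace.ofAddSubgroup (S : AddSubgroup B) (hlam : ∀ b, ∀ a ∈ S, lam b a ∈ S) :
    Subbrace B where
  carrier := S
  zero_mem := S.zero_mem
  add_mem := S.add_mem
  neg_mem := S.neg_mem
  mul_mem ha hb := by
    rw [mul_eq_add_lam]
    exact S.add_mem ha (hlam _ _ hb)
  inv_mem ha := by
    rw [inv_eq_neg_lam]
    exact S.neg_mem (hlam _ _ ha)

namespace BraceIdeal

/-- The ideal carried by a `λ`-invariant additive subgroup that is normal in `(B, +)` and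
stable under conjugation in `(B, ·)`. -/
def ofAddSubgroup (S : AddSubgroup B) (hlam : ∀ b, ∀ a ∈ S, lam b a ∈ S)
    (hadd : ∀ b, ∀ a ∈ S, b + a + -b ∈ S) (hmul : ∀ b, ∀ a ∈ S, b * a * b⁻¹ ∈ S) :
    BraceIdeal B where
  __ := Subbrace.ofAddSubgroup S hlam
  addConj_mem b _ ha := hadd b _ ha
  mulConj_mem b _ ha := hmul b _ ha
  lam_mem b _ ha := hlam b _ ha

/-- A `λ`-invariant additive subgroup of the socle is an ideal. -/
def ofLeSocle (S : AddSubgroup B) (hS : S ≤ socle B) (hlam : ∀ b, ∀ a ∈ S, lam b a ∈ S) :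
    BraceIdeal B :=
  ofAddSubgroup S hlam
    (fun b a ha => by rwa [← addCommute_of_mem_socle (hS ha) b, add_neg_cancel_right])
    (fun b a ha => by
      have hconj : b * a * b⁻¹ = lam b a := by
        rw [mul_inv_eq_iff_eq_mul, mul_eq_add_of_mem_socle (hS (hlam b a ha)), mul_eq_add_lam,
          addCommute_of_mem_socle (hS (hlam b a ha)) b]
      rw [hconj]
      exact hlam b a ha)

instance : Bot (BraceIdeal B) where
  bot := ofLeSocle ⊥ bot_le fun b a ha => by
    rw [AddSubgroup.mem_bot] at ha ⊢
    rw [ha, lam_zero]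

instance : Min (BraceIdeal B) where
  min I J := ofAddSubgroup (I.addSubgroup ⊓ J.addSubgroup)
    (fun b _ ha => ⟨I.lam_mem b ha.1, J.lam_mem b ha.2⟩)
    (fun b _ ha => ⟨I.addConj_mem b ha.1, J.addConj_mem b ha.2⟩)
    (fun b _ ha => ⟨I.mulConj_mem b ha.1, J.mulConj_mem b ha.2⟩)

variable (I : BraceIdeal B)

instance : I.addSubgroup.Normal where
  conj_mem _ ha b := I.addConj_mem b ha

instance : I.subgroup.Normal where
  conj_mem _ ha b := I.mulConj_mem b ha

theorem neg_add_mem_iff_inv_mul_mem {a b : B} : -a + b ∈ I.carrier ↔ a⁻¹ * b ∈ I.carrier := by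
  have h : a⁻¹ * b = lam a⁻¹ (-a + b) := by
    rw [lam_add, lam_neg, ← inv_eq_neg_lam, mul_eq_add_lam]
  rw [h]
  refine ⟨fun hab => I.lam_mem _ hab, fun hab => ?_⟩
  rw [← lam_inv_lam a (-a + b)]
  exact I.lam_mem a hab

/-- The quotient `B/I`, realized on the additive cosets, which are also the multiplicative ones. -/
instance : HasQuotient B (BraceIdeal B) := ⟨fun I => B ⧸ I.addSubgroup⟩

theorem leftRel_addSubgroup_iff_con {a b : B} :
    QuotientAddGroup.leftRel I.addSubgroup a b ↔ QuotientGroup.con I.subgroup a b := by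
  change _ ↔ QuotientGroup.leftRel I.subgroup a b
  rw [QuotientAddGroup.leftRel_apply, QuotientGroup.leftRel_apply]
  exact I.neg_add_mem_iff_inv_mul_mem

instance : Mul (B ⧸ I) where
  mul := Quotient.map₂ (· * ·) fun _ _ ha _ _ hb =>
    I.leftRel_addSubgroup_iff_con.2 ((QuotientGroup.con I.subgroup).mul
      (I.leftRel_addSubgroup_iff_con.1 ha) (I.leftRel_addSubgroup_iff_con.1 hb))

instance : Inv (B ⧸ I) where
  inv := Quotient.map (·⁻¹) fun _ _ ha =>
    I.leftRel_addSubgroup_iff_con.2 ((QuotientGroup.con I.subgroup).inv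
      (I.leftRel_addSubgroup_iff_con.1 ha))

instance : SkewBrace (B ⧸ I) where
  __ : AddGroup (B ⧸ I) := inferInstanceAs (AddGroup (B ⧸ I.addSubgroup))
  __ : Group (B ⧸ I) :=
    letI : One (B ⧸ I) := ⟨Quotient.mk _ 1⟩
    Group.ofLeftAxioms
      (by rintro ⟨a⟩ ⟨b⟩ ⟨c⟩; exact congrArg _ (mul_assoc a b c))
      (by rintro ⟨a⟩; exact congrArg _ (one_mul a))
      (by rintro ⟨a⟩; exact congrArg _ (inv_mul_cancel a))
  one_eq_zero := congrArg _ one_eq_zero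
  skew_distrib := by
    rintro ⟨a⟩ ⟨b⟩ ⟨c⟩
    exact congrArg _ (skew_distrib a b c)

end BraceIdeal

end Ideal

section Hom

/-- Brace homomorphisms: maps preserving both the addition and the multiplication. -/
structure BraceHom (B C : Type*) [SkewBrace B] [SkewBrace C] extends B →* C, B →+ C

namespace BraceHom

variable {B C D : Type*} [SkewBrace B] [SkewBrace C] [SkewBrace D]

instance : FunLike (BraceHom B C) B C where
  coe f := f.toFun
  coe_injective f g h := by
    cases f
    cases g
    congr
    exact DFunLike.coe_injective h

instance : MonoidHomClass (BraceHom B C) B C where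
  map_mul f := f.map_mul'
  map_one f := f.map_one'

instance : AddMonoidHomClass (BraceHom B C) B C where
  map_add f := f.map_add'
  map_zero f := f.map_zero'

/-- A map preserving both operations is a brace homomorphism. -/
def mk' (f : B → C) (hadd : ∀ a b, f (a + b) = f a + f b) (hmul : ∀ a b, f (a * b) = f a * f b) :
    BraceHom B C where
  toMonoidHom := MonoidHom.mk' f hmul
  map_zero' := (AddMonoidHom.mk' f hadd).map_zero
  map_add' := hadd

/-- The identity homomorphism. -/
def id (B : Type*) [SkewBrace B] : BraceHom B B := mk' _root_.id (fun _ _ => rfl) fun _ _ => rfl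

/-- The composite homomorphism `g ∘ f`. -/
def comp (g : BraceHom C D) (f : BraceHom B C) : BraceHom B D :=
  mk' (g ∘ f) (fun a b => by simp only [Function.comp_apply, map_add])
    fun a b => by simp only [Function.comp_apply, map_mul]

@[simp]
theorem comp_apply (g : BraceHom C D) (f : BraceHom B C) (b : B) : g.comp f b = g (f b) := rfl

variable (f : BraceHom B C)

theorem map_lam (a b : B) : f (lam a b) = lam (f a) (f b) := by
  rw [lam, lam, map_add, map_neg, map_mul]

/-- The preimage of an ideal under a brace homomorphism. -/
def comap (I : BraceIdeal C) : BraceIdeal B :=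
  BraceIdeal.ofAddSubgroup (I.addSubgroup.comap (f : B →+ C))
    (fun b a ha => by
      have h := I.lam_mem (f b) ha
      rwa [AddMonoidHom.coe_coe, ← map_lam] at h)
    (fun b a ha => by
      have h := I.addConj_mem (f b) ha
      rwa [AddMonoidHom.coe_coe, ← map_add, ← map_neg, ← map_add] at h)
    (fun b a ha => by
      have h := I.mulConj_mem (f b) ha
      rwa [AddMonoidHom.coe_coe, ← map_mul, ← map_inv, ← map_mul] at h)

variable {f}

theorem exists_comp_eq_of_ker_le (hf : Function.Surjective f) {g : BraceHom B D}
    (h : ∀ b, f b = 0 → g b = 0) : ∃ k : BraceHom C D, ∀ b, k (f b) = g b := by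
  have hfactor : ∀ b, g (Function.surjInv hf (f b)) = g b := fun b => by
    rw [← sub_eq_zero, ← map_sub]
    exact h _ (by rw [map_sub, Function.surjInv_eq hf, sub_self])
  refine ⟨mk' (g ∘ Function.surjInv hf) (fun c c' => ?_) (fun c c' => ?_), hfactor⟩ <;>
    obtain ⟨b, rfl⟩ := hf c <;> obtain ⟨b', rfl⟩ := hf c'
  · simp only [Function.comp_apply, ← map_add f, hfactor, map_add g]
  · simp only [Function.comp_apply, ← map_mul f, hfactor, map_mul g]

theorem map_mem_socle (hf : Function.Surjective f) {z : B} (hz : z ∈ socle B) : f z ∈ socle C := by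
  refine mem_socle_iff.2 ⟨hf.forall.2 fun b => ?_, hf.forall.2 fun b => ?_⟩
  · rw [← map_lam, lam_of_mem_socle hz]
  · exact (addCommute_of_mem_socle hz b).map f

end BraceHom

namespace BraceIdeal

variable {B : Type*} [SkewBrace B] (I : BraceIdeal B)

/-- The quotient map `B → B/I`. -/
def quotientMap : BraceHom B (B ⧸ I) :=
  BraceHom.mk' (Quotient.mk _) (fun _ _ => rfl) fun _ _ => rfl

theorem quotientMap_surjective : Function.Surjective I.quotientMap := Quotient.mk_surjective

theorem quotientMap_eq_zero_iff {b : B} : I.quotientMap b = 0 ↔ b ∈ I.carrier :=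
  QuotientAddGroup.eq_zero_iff (N := I.addSubgroup) b

end BraceIdeal

end Hom

section CyclicExt

variable {B C D : Type*} [SkewBrace B] [SkewBrace C] [SkewBrace D]

/-- `f` is surjective and its kernel is, additively, the cyclic group generated by `x`. This is how
a cyclic factor at the bottom of a chain of ideals of `B` is recorded. -/
structure IsCyclicExt (f : BraceHom B C) (x : B) : Prop where
  surjective : Function.Surjective f
  map_eq_zero_iff (b : B) : f b = 0 ↔ b ∈ AddSubgroup.zmultiples x

variable {f : BraceHom B C} {g : BraceHom C D} {x : B}

theorem BraceHom.map_lam_eq_zero {z : B} (hz : f z = 0) (b : B) : f (lam b z) = 0 := by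
  rw [BraceHom.map_lam, hz, lam_zero]

theorem BraceHom.map_addConj_eq_zero {z : B} (hz : f z = 0) (b : B) : f (b + z + -b) = 0 := by
  rw [map_add, map_add, map_neg, hz, add_zero, add_neg_cancel]

theorem BraceHom.map_mulConj_eq_zero {z : B} (hz : f z = 0) (b : B) : f (b * z * b⁻¹) = 0 := by
  rw [map_mul, map_mul, map_inv, hz, ← one_eq_zero, mul_one, mul_inv_cancel]

namespace IsCyclicExt

theorem quotientMap {I : BraceIdeal B} (hI : I.addSubgroup = AddSubgroup.zmultiples x) :
    IsCyclicExt I.quotientMap x :=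
  ⟨I.quotientMap_surjective, fun _ => hI ▸ I.quotientMap_eq_zero_iff⟩

theorem of_comp {k : BraceHom C D} {z : B} (hf : Function.Surjective f)
    (hk : Function.Surjective k) (hz : k (f z) = 0)
    (hgen : ∀ y, k (f y) = 0 → ∃ n : ℤ, f y = n • f z) : IsCyclicExt k (f z) where
  surjective := hk
  map_eq_zero_iff := hf.forall.2 fun y => by
    refine ⟨fun hy => ?_, fun ⟨n, hn⟩ => ?_⟩
    · obtain ⟨n, hn⟩ := hgen y hy
      exact ⟨n, hn.symm⟩
    · rw [← hn, map_zsmul, hz, zsmul_zero]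

variable (hf : IsCyclicExt f x)
include hf

theorem map_self : f x = 0 := (hf.map_eq_zero_iff x).2 (AddSubgroup.mem_zmultiples x)

theorem exists_zsmul_eq {z : B} (hz : f z = 0) : ∃ n : ℤ, n • x = z := (hf.map_eq_zero_iff z).1 hz

theorem exists_lam_eq_zsmul (b : B) : ∃ n : ℤ, n • x = lam b x :=
  hf.exists_zsmul_eq (BraceHom.map_lam_eq_zero hf.map_self b)

theorem nsmul_eq_zero_of_map_eq_zero {z : B} (hz : f z = 0) : addOrderOf x • z = 0 := by
  obtain ⟨n, rfl⟩ := hf.exists_zsmul_eq hz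
  rw [← natCast_zsmul, zsmul_comm, natCast_zsmul, addOrderOf_nsmul_eq_zero, zsmul_zero]

theorem card_ker : Nat.card (MonoidHom.ker (f : B →* C)) = addOrderOf x := by
  rw [← Nat.card_zmultiples]
  refine Nat.card_congr (Equiv.subtypeEquivRight fun b => ?_)
  rw [MonoidHom.mem_ker, one_eq_zero]
  exact hf.map_eq_zero_iff b

theorem pow_eq_one_of_map_eq_zero {z : B} (hz : f z = 0) : z ^ addOrderOf x = 1 := by
  have hmem : z ∈ MonoidHom.ker (f : B →* C) := by
    rw [MonoidHom.mem_ker, one_eq_zero]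
    exact hz
  rw [← hf.card_ker]
  exact congrArg Subtype.val (pow_card_eq_one' (x := (⟨z, hmem⟩ : MonoidHom.ker (f : B →* C))))

section OrderTwo

variable (hx : addOrderOf x = 2)
include hx

theorem eq_zero_or_eq {z : B} (hz : f z = 0) : z = 0 ∨ z = x := by
  obtain ⟨n, rfl⟩ := hf.exists_zsmul_eq hz
  have hmod : (n % 2) • x = n • x := by
    have h := mod_addOrderOf_zsmul x n
    rwa [hx] at h
  refine (Int.emod_two_eq_zero_or_one n).imp (fun h => ?_) fun h => ?_
  · rw [← hmod, h, zero_zsmul]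
  · rw [← hmod, h, one_zsmul]

theorem eq_of_map_eq_zero {z w : B} (hz : f z = 0) (hw : f w = 0) (hzw : w = 0 ↔ z = 0) :
    w = z := by
  rcases hf.eq_zero_or_eq hx hz with hz | hz
  · rw [hz, hzw.2 hz]
  · rcases hf.eq_zero_or_eq hx hw with hw | hw
    · rw [hw, hzw.1 hw]
    · rw [hw, hz]

theorem lam_eq_self {z : B} (hz : f z = 0) (b : B) : lam b z = z := by
  refine hf.eq_of_map_eq_zero hx hz (BraceHom.map_lam_eq_zero hz b) ⟨fun h => ?_, fun h => ?_⟩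
  · rw [← inv_lam_lam b z, h, lam_zero]
  · rw [h, lam_zero]

theorem addCommute {z : B} (hz : f z = 0) (b : B) : AddCommute z b := by
  have h : b + z + -b = z := by
    refine hf.eq_of_map_eq_zero hx hz (BraceHom.map_addConj_eq_zero hz b) ?_
    rw [add_neg_eq_zero, add_eq_left]
  exact (add_neg_eq_iff_eq_add.1 h).symm

theorem commute {z : B} (hz : f z = 0) (b : B) : Commute b z := by
  have h : b * z * b⁻¹ = z := by
    refine hf.eq_of_map_eq_zero hx hz (BraceHom.map_mulConj_eq_zero hz b) ?_
    rw [← one_eq_zero, mul_inv_eq_one, mul_eq_left]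
  exact mul_inv_eq_iff_eq_mul.1 h

end OrderTwo

end IsCyclicExt

end CyclicExt

section Swap

variable {B : Type u} {C D : Type*} [SkewBrace B] [SkewBrace C] [SkewBrace D]
variable {f : BraceHom B C} {g : BraceHom C D} {x t : B}

theorem IsCyclicExt.exists_eq_zsmul_add_zsmul (hf : IsCyclicExt f x) (hg : IsCyclicExt g (f t))
    {k : B} (hk : g (f k) = 0) : ∃ n m : ℤ, k = n • t + m • x := by
  obtain ⟨n, hn⟩ := hg.exists_zsmul_eq hk
  obtain ⟨m, hm⟩ := hf.exists_zsmul_eq (z := -(n • t) + k)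
    (by rw [map_add, map_neg, map_zsmul, hn, neg_add_cancel])
  exact ⟨n, m, by rw [hm, add_neg_cancel_left]⟩

theorem IsCyclicExt.addCommute_of_map_map_eq_zero (hf : IsCyclicExt f x)
    (hg : IsCyclicExt g (f t)) (hx : ∀ b, AddCommute x b) {k k' : B} (hk : g (f k) = 0)
    (hk' : g (f k') = 0) : AddCommute k k' := by
  obtain ⟨n, m, rfl⟩ := hf.exists_eq_zsmul_add_zsmul hg hk
  obtain ⟨n', m', rfl⟩ := hf.exists_eq_zsmul_add_zsmul hg hk'
  have hxz : ∀ (i : ℤ) (b : B), AddCommute (i • x) b := fun i b => (hx b).zsmul_left i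
  exact (((AddCommute.refl t).zsmul_zsmul n n').add_left (hxz m _)).add_right (hxz m' _).symm

theorem IsCyclicExt.exists_swap_of_ideal {T : BraceIdeal B}
    (hT : T.addSubgroup = AddSubgroup.zmultiples t)
    (hTf : ∀ b ∈ T.carrier, f b = 0 → b = 0)
    (hf : IsCyclicExt f x) (hg : IsCyclicExt g (f t)) :
    ∃ h : BraceHom (B ⧸ T) D, IsCyclicExt h (T.quotientMap x) ∧
      addOrderOf (T.quotientMap x) = addOrderOf x := by
  have hq : IsCyclicExt T.quotientMap t := .quotientMap hT
  obtain ⟨h, hh⟩ := BraceHom.exists_comp_eq_of_ker_le hq.surjective (g := g.comp f) fun b hb => by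
    obtain ⟨n, rfl⟩ := hq.exists_zsmul_eq hb
    rw [BraceHom.comp_apply, map_zsmul, map_zsmul, hg.map_self, zsmul_zero]
  simp only [BraceHom.comp_apply] at hh
  refine ⟨h, .of_comp hq.surjective ?_ ?_ fun y hy => ?_, ?_⟩
  · refine Function.Surjective.of_comp (g := T.quotientMap) ?_
    rw [show h ∘ T.quotientMap = g ∘ f from funext hh]
    exact hg.surjective.comp hf.surjective
  · rw [hh, hf.map_self, map_zero]
  · obtain ⟨n, m, rfl⟩ := hf.exists_eq_zsmul_add_zsmul hg ((hh y).symm.trans hy)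
    exact ⟨m, by rw [map_add, map_zsmul, hq.map_self, zsmul_zero, zero_add, map_zsmul]⟩
  · refine addOrderOf_eq_addOrderOf_iff.2 fun n => ?_
    rw [← map_nsmul, T.quotientMap_eq_zero_iff]
    refine ⟨fun hn => hTf _ hn ?_, fun hn => hn ▸ T.zero_mem⟩
    rw [map_nsmul, hf.map_self, nsmul_zero]

namespace IsCyclicExt

variable (hf : IsCyclicExt f x) (hg : IsCyclicExt g (f t)) (hx : ∀ b, AddCommute x b) {p : ℕ}
  (ht : p • t = 0) (htor : ∀ j, f j = 0 → p • j = 0 → j = 0)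
include hf hg hx ht htor

theorem mem_zmultiples_iff_nsmul_eq_zero {k : B} :
    k ∈ AddSubgroup.zmultiples t ↔ g (f k) = 0 ∧ p • k = 0 := by
  have hpt (n : ℤ) : p • n • t = 0 := by
    rw [← natCast_zsmul, zsmul_comm, natCast_zsmul, ht, zsmul_zero]
  refine ⟨?_, fun ⟨hk, hpk⟩ => ?_⟩
  · rintro ⟨n, rfl⟩
    exact ⟨by simp only [map_zsmul, hg.map_self, zsmul_zero], hpt n⟩
  · obtain ⟨n, m, rfl⟩ := hf.exists_eq_zsmul_add_zsmul hg hk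
    have hmx : f (m • x) = 0 := by rw [map_zsmul, hf.map_self, zsmul_zero]
    have hcomm : AddCommute (n • t) (m • x) := (((hx t).symm.zsmul_left n).zsmul_right m)
    rw [hcomm.add_nsmul, hpt, zero_add] at hpk
    rw [htor _ hmx hpk, add_zero]
    exact AddSubgroup.zsmul_mem_zmultiples t n

theorem lam_mem_zmultiples (b : B) {k : B} (hk : k ∈ AddSubgroup.zmultiples t) :
    lam b k ∈ AddSubgroup.zmultiples t := by
  rw [hf.mem_zmultiples_iff_nsmul_eq_zero hg hx ht htor] at hk ⊢
  exact ⟨BraceHom.map_lam_eq_zero (f := g.comp f) hk.1 b, by rw [← lam_nsmul, hk.2, lam_zero]⟩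

theorem addConj_mem_zmultiples (b : B) {k : B} (hk : k ∈ AddSubgroup.zmultiples t) :
    b + k + -b ∈ AddSubgroup.zmultiples t := by
  rw [hf.mem_zmultiples_iff_nsmul_eq_zero hg hx ht htor] at hk ⊢
  refine ⟨BraceHom.map_addConj_eq_zero (f := g.comp f) hk.1 b, ?_⟩
  rw [addConj_nsmul, hk.2, add_zero, add_neg_cancel]

variable (hft : addOrderOf (f t) = p)
include hft

theorem pow_eq_one_of_mem_zmultiples {k : B} (hk : k ∈ AddSubgroup.zmultiples t) : k ^ p = 1 := by
  let T : Subbrace B := .ofAddSubgroup (AddSubgroup.zmultiples t)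
    fun b _ => hf.lam_mem_zmultiples hg hx ht htor b
  have hkp : k ^ p ∈ AddSubgroup.zmultiples t := T.subgroup.pow_mem hk p
  rw [hf.mem_zmultiples_iff_nsmul_eq_zero hg hx ht htor] at hk hkp
  rw [one_eq_zero]
  refine htor _ ?_ hkp.2
  rw [map_pow, ← hft, hg.pow_eq_one_of_map_eq_zero hk.1, one_eq_zero]

variable (hpow : ∀ j, f j = 0 → j ^ p = 1 → j = 1)
  (hcomm : ∀ k, g (f k) = 0 → ∀ j, f j = 0 → Commute k j)
include hpow hcomm

theorem mem_zmultiples_of_pow_eq_one {k : B} (hk : g (f k) = 0) (hkp : k ^ p = 1) :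
    k ∈ AddSubgroup.zmultiples t := by
  obtain ⟨n, hn⟩ := hg.exists_zsmul_eq hk
  have hs : n • t ∈ AddSubgroup.zmultiples t := AddSubgroup.zsmul_mem_zmultiples t n
  have hsp : (n • t) ^ p = 1 := hf.pow_eq_one_of_mem_zmultiples hg hx ht htor hft hs
  have hj : f ((n • t)⁻¹ * k) = 0 := by
    rw [map_mul, map_inv, map_zsmul, hn, inv_mul_cancel, one_eq_zero]
  have hsj : Commute (n • t) ((n • t)⁻¹ * k) :=
    hcomm _ (by rw [map_zsmul, hn, hk]) _ hj
  have hjp : ((n • t)⁻¹ * k) ^ p = 1 := by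
    have h := hsj.mul_pow p
    rwa [mul_inv_cancel_left, hkp, hsp, one_mul, eq_comm] at h
  rwa [← inv_mul_eq_one.1 (hpow _ hj hjp)]

/-- Inside `ker (g ∘ f)` the elements of `⟨t⟩` are characterized by `p • k = 0` and `k ^ p = 1`. -/
theorem exists_ideal_eq_zmultiples :
    ∃ T : BraceIdeal B, T.addSubgroup = AddSubgroup.zmultiples t := by
  refine ⟨.ofAddSubgroup _ (fun b _ => hf.lam_mem_zmultiples hg hx ht htor b)
    (fun b _ => hf.addConj_mem_zmultiples hg hx ht htor b) fun b k hk => ?_, rfl⟩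
  refine hf.mem_zmultiples_of_pow_eq_one hg hx ht htor hft hpow hcomm
    (BraceHom.map_mulConj_eq_zero (f := g.comp f)
      ((hf.mem_zmultiples_iff_nsmul_eq_zero hg hx ht htor).1 hk).1 b) ?_
  rw [conj_pow, hf.pow_eq_one_of_mem_zmultiples hg hx ht htor hft hk, mul_one, mul_inv_cancel]

theorem exists_swap :
    ∃ (E : Type u) (_ : SkewBrace E) (q : BraceHom B E) (h : BraceHom E D),
      IsCyclicExt q t ∧ IsCyclicExt h (q x) ∧ addOrderOf t = p ∧
        addOrderOf (q x) = addOrderOf x := by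
  obtain ⟨T, hT⟩ := hf.exists_ideal_eq_zmultiples hg hx ht htor hft hpow hcomm
  have hTf (b : B) (hb : b ∈ T.addSubgroup) (hb0 : f b = 0) : b = 0 := by
    rw [hT, hf.mem_zmultiples_iff_nsmul_eq_zero hg hx ht htor] at hb
    exact htor b hb0 hb.2
  obtain ⟨h, hh, hord⟩ := hf.exists_swap_of_ideal hT hTf hg
  exact ⟨_, _, T.quotientMap, h, .quotientMap hT, hh, Nat.dvd_antisymm
    (addOrderOf_dvd_of_nsmul_eq_zero ht) (hft ▸ addOrderOf_map_dvd (f : B →+ C) t), hord⟩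

end IsCyclicExt

end Swap

section OddFactors

variable {B : Type u} {C D : Type*} [SkewBrace B] [SkewBrace C] [SkewBrace D]
variable {f : BraceHom B C} {g : BraceHom C D} {x : B} {y : C}

theorem IsCyclicExt.exists_odd_below_two (hf : IsCyclicExt f x) (hx : addOrderOf x = 2)
    (hg : IsCyclicExt g y) (hp : Odd (addOrderOf y)) :
    ∃ (E : Type u) (_ : SkewBrace E) (q : BraceHom B E) (h : BraceHom E D) (t : B) (z : E),
      IsCyclicExt q t ∧ addOrderOf t = addOrderOf y ∧ IsCyclicExt h z ∧ addOrderOf z = 2 := by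
  obtain ⟨b, rfl⟩ := hf.surjective y
  set p := addOrderOf (f b)
  obtain ⟨m, hm⟩ := hp
  have hft : f ((p + 1) • b) = f b := by
    rw [map_nsmul, succ_nsmul, addOrderOf_nsmul_eq_zero, zero_add]
  have hpb : 2 • p • b = 0 := by
    rw [← hx]
    exact hf.nsmul_eq_zero_of_map_eq_zero (by rw [map_nsmul, addOrderOf_nsmul_eq_zero])
  have ht : p • (p + 1) • b = 0 := by
    rw [← mul_nsmul', mul_comm, show p + 1 = (m + 1) * 2 by lia, mul_assoc, mul_nsmul',
      mul_nsmul', hpb, nsmul_zero]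
  have htor (j : B) (hj : f j = 0) (hpj : p • j = 0) : j = 0 := by
    have h2 : 2 • j = 0 := hx ▸ hf.nsmul_eq_zero_of_map_eq_zero hj
    rwa [hm, add_nsmul, one_nsmul, mul_nsmul, h2, nsmul_zero, zero_add] at hpj
  have hpow (j : B) (hj : f j = 0) (hpj : j ^ p = 1) : j = 1 := by
    have h2 : j ^ 2 = 1 := hx ▸ hf.pow_eq_one_of_map_eq_zero hj
    rwa [hm, pow_add, pow_one, pow_mul, h2, one_pow, one_mul] at hpj
  have hg' : IsCyclicExt g (f ((p + 1) • b)) := by rwa [hft]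
  obtain ⟨E, _, q, h, hq, hh, hqt, hhx⟩ := hf.exists_swap hg' (hf.addCommute hx hf.map_self) ht
    htor (by rw [hft]) hpow fun k _ j hj => hf.commute hx hj k
  exact ⟨E, _, q, h, _, _, hq, hqt, hh, hhx.trans hx⟩

end OddFactors

section InfSocleExt

/-- The kernel of `f` is an infinite cyclic factor of a chain of ideals witnessing supersolubility:
it is generated by an element `x` of infinite additive order that lies in the socle. -/
structure IsInfSocleExt {B C : Type*} [SkewBrace B] [SkewBrace C] (f : BraceHom B C) (x : B) :
    Prop extends IsCyclicExt f x where
  mem_socle : x ∈ socle B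
  addOrderOf_eq_zero : addOrderOf x = 0

variable {B : Type u} {C D : Type*} [SkewBrace B] [SkewBrace C] [SkewBrace D]
variable {f : BraceHom B C} {g : BraceHom C D} {x : B} {y : C} {p : ℕ}

namespace IsInfSocleExt

theorem of_ker_le_socle {z : B} (hf : IsCyclicExt f z) (hker : ∀ k, f k = 0 → k ∈ socle B)
    (hx : f x = 0) (hx0 : addOrderOf x = 0) : IsInfSocleExt f z where
  __ := hf
  mem_socle := hker z hf.map_self
  addOrderOf_eq_zero := by
    have hdvd := addOrderOf_dvd_of_mem_zmultiples ((hf.map_eq_zero_iff x).1 hx)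
    rwa [hx0, zero_dvd_iff] at hdvd

variable (hf : IsInfSocleExt f x)
include hf

theorem eq_zero_of_zsmul_eq_zero {n : ℤ} (hn : n • x = 0) : n = 0 := by
  rwa [← addOrderOf_dvd_iff_zsmul_eq_zero, hf.addOrderOf_eq_zero, Nat.cast_zero, zero_dvd_iff] at hn

theorem mem_socle_of_map_eq_zero {j : B} (hj : f j = 0) : j ∈ socle B := by
  obtain ⟨n, rfl⟩ := hf.exists_zsmul_eq hj
  exact zsmul_mem hf.mem_socle n

theorem eq_zero_of_nsmul_eq_zero (hp : p ≠ 0) {j : B} (hj : f j = 0) (hpj : p • j = 0) :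
    j = 0 := by
  obtain ⟨n, rfl⟩ := hf.exists_zsmul_eq hj
  rw [← natCast_zsmul, ← mul_zsmul] at hpj
  have hn : (p : ℤ) * n = 0 := hf.eq_zero_of_zsmul_eq_zero hpj
  rw [(mul_eq_zero.1 hn).resolve_left (by exact_mod_cast hp), zero_zsmul]

/-- `λ` acts on the infinite cyclic group `⟨x⟩` by signs. -/
theorem sq_mem_lamStabilizer (b : B) : b ^ 2 ∈ lamStabilizer x := by
  obtain ⟨m, hm⟩ := hf.exists_lam_eq_zsmul b
  obtain ⟨n, hn⟩ := hf.exists_lam_eq_zsmul b⁻¹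
  have hnm : n * m = 1 := by
    have h : (n * m - 1) • x = 0 := by
      rw [sub_zsmul, mul_zsmul, hm, ← lam_zsmul, hn, lam_inv_lam, one_zsmul, add_neg_cancel]
    exact sub_eq_zero.1 (hf.eq_zero_of_zsmul_eq_zero h)
  rw [mem_lamStabilizer, sq, mul_lam, ← hm, lam_zsmul, ← hm, ← mul_zsmul,
    Int.isUnit_mul_self (.of_mul_eq_one_right n hnm), one_zsmul]

theorem lam_eq_self_of_odd (hp : Odd p) {k : B} (hk : f (k ^ p) = 0) {j : B} (hj : f j = 0) :
    lam k j = j := by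
  obtain ⟨m, rfl⟩ := hp
  have hkp : k ^ (2 * m + 1) ∈ lamStabilizer x :=
    lam_of_mem_socle (hf.mem_socle_of_map_eq_zero hk) x
  have hkx : k ∈ lamStabilizer x := by
    rw [pow_succ, pow_mul] at hkp
    exact (Subgroup.mul_mem_cancel_left _ (pow_mem (hf.sq_mem_lamStabilizer k) m)).1 hkp
  obtain ⟨n, rfl⟩ := hf.exists_zsmul_eq hj
  rw [lam_zsmul, mem_lamStabilizer.1 hkx]

end IsInfSocleExt

/-- One may divide by `n`, because multiplication by `n` is injective on `ker f` and commutes with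
`λ` and with additive conjugation. -/
theorem mem_socle_of_nsmul_of_pow {n : ℕ}
    (hinj : ∀ k, f k = 0 → ∀ l, f l = 0 → n • k = n • l → k = l)
    (hnsmul : ∀ k, f k = 0 → n • k ∈ socle B) (hpow : ∀ k, f k = 0 → k ^ n ∈ socle B)
    (hlam : ∀ k, f k = 0 → ∀ l, f l = 0 → lam k (n • l) = n • l) {k : B} (hk : f k = 0) :
    k ∈ socle B := by
  refine mem_socle_iff.2 ⟨fun b => ?_, fun b => ?_⟩
  · have hc : f (-b + lam k b) = 0 := by
      rw [map_add, BraceHom.map_lam, hk, zero_lam, map_neg, neg_add_cancel]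
    have hkc : lam k (-b + lam k b) = -b + lam k b :=
      hinj _ (BraceHom.map_lam_eq_zero hc k) _ hc <| by rw [← lam_nsmul, hlam k hk _ hc]
    have hb : b + n • (-b + lam k b) = b := by
      rw [← pow_lam_of_lam_eq_add (add_neg_cancel_left b _).symm hkc,
        lam_of_mem_socle (hpow k hk)]
    rw [add_eq_left, ← nsmul_zero n] at hb
    exact (neg_add_eq_zero.1 (hinj _ hc 0 (map_zero f) hb)).symm
  · have hconj : b + k + -b = k := by
      refine hinj _ (BraceHom.map_addConj_eq_zero hk b) k hk ?_
      rw [addConj_nsmul, ← addCommute_of_mem_socle (hnsmul k hk) b, add_neg_cancel_right]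
    exact (add_neg_eq_iff_eq_add.1 hconj).symm

theorem exists_ker_eq_zmultiples_of_nsmul {n : ℕ} (hker : ∀ k, f k = 0 → k ∈ socle B)
    (htor : ∀ k, f k = 0 → n • k = 0 → k = 0)
    (hnsmul : ∀ k, f k = 0 → n • k ∈ AddSubgroup.zmultiples x) :
    ∃ z, ∀ b, f b = 0 ↔ b ∈ AddSubgroup.zmultiples z := by
  let φ : AddMonoidHom.ker (f : B →+ C) →+ AddSubgroup.zmultiples x :=
    .mk' (fun k => ⟨n • (k : B), hnsmul k k.2⟩) fun k l =>
      Subtype.ext ((addCommute_of_mem_socle (hker k k.2) l).add_nsmul n)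
  have hφ : Function.Injective φ := (injective_iff_map_eq_zero φ).2 fun k hk =>
    Subtype.ext (htor k k.2 (congrArg Subtype.val hk))
  obtain ⟨z, hz⟩ := (AddSubgroup.isAddCyclic_iff_exists_zmultiples_eq_top _).1
    (isAddCyclic_of_injective φ hφ)
  exact ⟨z, fun b => by rw [hz]; rfl⟩

theorem IsInfSocleExt.exists_merge (hf : IsInfSocleExt f x) (hg : IsCyclicExt g y)
    (hp : Odd (addOrderOf y)) (htor : ∀ k, g (f k) = 0 → addOrderOf y • k = 0 → k = 0) :
    ∃ z, IsInfSocleExt (g.comp f) z := by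
  obtain ⟨b, rfl⟩ := hf.surjective y
  set p := addOrderOf (f b)
  have hpK (k : B) (hk : g (f k) = 0) : f (p • k) = 0 := by
    rw [map_nsmul, hg.nsmul_eq_zero_of_map_eq_zero hk]
  have hkp (k : B) (hk : g (f k) = 0) : f (k ^ p) = 0 := by
    rw [map_pow, hg.pow_eq_one_of_map_eq_zero hk, one_eq_zero]
  have hinj (k : B) (hk : g (f k) = 0) (l : B) (hl : g (f l) = 0) (h : p • k = p • l) : k = l := by
    have hcomm : AddCommute (-k) l := (hf.addCommute_of_map_map_eq_zero hg
      (addCommute_of_mem_socle hf.mem_socle) hk hl).neg_left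
    refine neg_add_eq_zero.1 (htor _ ?_ ?_)
    · rw [map_add, map_add, map_neg, map_neg, hk, hl, neg_zero, zero_add]
    · rw [hcomm.add_nsmul, neg_nsmul, h, neg_add_cancel]
  have hker (k : B) (hk : g.comp f k = 0) : k ∈ socle B :=
    mem_socle_of_nsmul_of_pow (f := g.comp f) (n := p) hinj
      (fun k hk => hf.mem_socle_of_map_eq_zero (hpK k hk))
      (fun k hk => hf.mem_socle_of_map_eq_zero (hkp k hk))
      (fun k hk l hl => hf.lam_eq_self_of_odd hp (hkp k hk) (hpK l hl)) hk
  obtain ⟨z, hz⟩ := exists_ker_eq_zmultiples_of_nsmul (f := g.comp f) (n := p) hker htor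
    fun k hk => (hf.map_eq_zero_iff _).1 (hpK k hk)
  have hgf : IsCyclicExt (g.comp f) z := ⟨hg.surjective.comp hf.surjective, hz⟩
  exact ⟨z, .of_ker_le_socle hgf hker (by rw [BraceHom.comp_apply, hf.map_self, map_zero])
    hf.addOrderOf_eq_zero⟩

theorem IsCyclicExt.of_prime_addOrderOf (hf : IsCyclicExt f x) (hp : (addOrderOf x).Prime) {z : B}
    (hz : f z = 0) (hz0 : z ≠ 0) : IsCyclicExt f z ∧ addOrderOf z = addOrderOf x := by
  have hzx : z ∈ AddSubgroup.zmultiples x := (hf.map_eq_zero_iff z).1 hz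
  have hord : addOrderOf z = addOrderOf x :=
    (hp.eq_one_or_self_of_dvd _ (addOrderOf_dvd_of_mem_zmultiples hzx)).resolve_left
      (AddMonoid.addOrderOf_eq_one_iff.not.2 hz0)
  have : Finite (AddSubgroup.zmultiples x) :=
    Nat.finite_of_card_ne_zero (Nat.card_zmultiples x ▸ hp.ne_zero)
  have heq : AddSubgroup.zmultiples z = AddSubgroup.zmultiples x :=
    AddSubgroup.eq_of_le_of_card_ge (AddSubgroup.zmultiples_le_of_mem hzx)
      (by rw [Nat.card_zmultiples, Nat.card_zmultiples, hord])
  exact ⟨⟨hf.surjective, heq ▸ hf.map_eq_zero_iff⟩, hord⟩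

theorem IsInfSocleExt.exists_odd_below (hf : IsInfSocleExt f x) (hg : IsCyclicExt g y)
    (hp : (addOrderOf y).Prime) (hodd : Odd (addOrderOf y)) {t : B} (ht : g (f t) = 0)
    (ht0 : t ≠ 0) (hyt : addOrderOf y • t = 0) :
    ∃ (E : Type u) (_ : SkewBrace E) (q : BraceHom B E) (h : BraceHom E D) (z : E),
      IsCyclicExt q t ∧ addOrderOf t = addOrderOf y ∧ IsInfSocleExt h z := by
  have htor (j : B) (hj : f j = 0) (hpj : addOrderOf y • j = 0) : j = 0 :=
    hf.eq_zero_of_nsmul_eq_zero hp.ne_zero hj hpj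
  have hpow (j : B) (hj : f j = 0) (hpj : j ^ addOrderOf y = 1) : j = 1 := by
    rw [one_eq_zero] at hpj ⊢
    rw [pow_eq_nsmul_of_mem_socle (hf.mem_socle_of_map_eq_zero hj)] at hpj
    exact htor j hj hpj
  have hcomm (k : B) (hk : g (f k) = 0) (j : B) (hj : f j = 0) : Commute k j :=
    commute_of_mem_socle_of_lam_eq (hf.mem_socle_of_map_eq_zero hj)
      (hf.lam_eq_self_of_odd hodd
        (by rw [map_pow, hg.pow_eq_one_of_map_eq_zero hk, one_eq_zero]) hj)
  obtain ⟨hgt, hord⟩ := hg.of_prime_addOrderOf hp ht fun h => ht0 (htor t h hyt)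
  obtain ⟨E, _, q, h, hq, hh, hqt, hhx⟩ := hf.exists_swap hgt
    (addCommute_of_mem_socle hf.mem_socle) hyt htor hord hpow hcomm
  exact ⟨E, _, q, h, _, hq, hqt, hh, BraceHom.map_mem_socle hq.surjective hf.mem_socle,
    hhx.trans hf.addOrderOf_eq_zero⟩

end InfSocleExt

section Series

/-- `B` has a chain of ideals whose factors, from the bottom up, are of order `2` or infinite cyclic
in the socle of the corresponding quotient, exactly `n` of them being infinite. -/
inductive HasTwoSeries : ℕ → (B : Type u) → [SkewBrace B] → Prop
  | of_subsingleton {B : Type u} [SkewBrace B] [Subsingleton B] : HasTwoSeries 0 B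
  | two {n : ℕ} {B C : Type u} [SkewBrace B] [SkewBrace C] {f : BraceHom B C} {x : B} :
      IsCyclicExt f x → addOrderOf x = 2 → HasTwoSeries n C → HasTwoSeries n B
  | infinite {n : ℕ} {B C : Type u} [SkewBrace B] [SkewBrace C] {f : BraceHom B C} {x : B} :
      IsInfSocleExt f x → HasTwoSeries n C → HasTwoSeries (n + 1) B

/-- `B` has a chain of ideals whose factors, from the bottom up, first are of odd prime order and
then continue as in `HasTwoSeries`. -/
inductive HasOddTwoSeries : (B : Type u) → [SkewBrace B] → Prop
  | of_hasTwoSeries {n : ℕ} {B : Type u} [SkewBrace B] : HasTwoSeries n B → HasOddTwoSeries B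
  | odd {B C : Type u} [SkewBrace B] [SkewBrace C] {f : BraceHom B C} {x : B} :
      IsCyclicExt f x → (addOrderOf x).Prime → addOrderOf x ≠ 2 → HasOddTwoSeries C →
      HasOddTwoSeries B

namespace HasOddTwoSeries

variable {B C : Type u} [SkewBrace B] [SkewBrace C] {f : BraceHom B C} {x : B}

theorem two (hf : IsCyclicExt f x) (hx : addOrderOf x = 2) (hC : HasOddTwoSeries C) :
    HasOddTwoSeries B := by
  induction hC generalizing B with
  | of_hasTwoSeries hC => exact .of_hasTwoSeries (.two hf hx hC)
  | odd hg hp hp2 _ ih =>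
    obtain ⟨E, _, q, h, t, z, hq, ht, hh, hz⟩ :=
      hf.exists_odd_below_two hx hg (hp.odd_of_ne_two hp2)
    exact .odd hq (ht ▸ hp) (ht ▸ hp2) (ih hh hz)

theorem infinite (hf : IsInfSocleExt f x) (hC : HasOddTwoSeries C) : HasOddTwoSeries B := by
  induction hC generalizing B with
  | of_hasTwoSeries hC => exact .of_hasTwoSeries (.infinite hf hC)
  | @odd C D _ _ g y hg hp hp2 _ ih =>
    have hodd : Odd (addOrderOf y) := hp.odd_of_ne_two hp2
    by_cases htor : ∀ t, g (f t) = 0 → addOrderOf y • t = 0 → t = 0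
    · obtain ⟨z, hz⟩ := hf.exists_merge hg hodd htor
      exact ih hz
    · push Not at htor
      obtain ⟨t, ht, hyt, ht0⟩ := htor
      obtain ⟨E, _, q, h, z, hq, hord, hh⟩ := hf.exists_odd_below hg hp hodd ht ht0 hyt
      exact .odd hq (hord ▸ hp) (hord ▸ hp2) (ih hh)

theorem prime (hf : IsCyclicExt f x) (hx : (addOrderOf x).Prime) (hC : HasOddTwoSeries C) :
    HasOddTwoSeries B :=
  (eq_or_ne (addOrderOf x) 2).elim (fun h2 => hC.two hf h2) fun h2 => .odd hf hx h2 hC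

theorem exists_hasTwoSeries (hB : HasOddTwoSeries B)
    (hodd : ∀ x : B, (addOrderOf x).Prime → addOrderOf x = 2) : ∃ n, HasTwoSeries n B := by
  cases hB with
  | of_hasTwoSeries hB => exact ⟨_, hB⟩
  | odd _ hx h2 _ => exact absurd (hodd _ hx) h2

end HasOddTwoSeries

end Series

section Factor

variable {B C D : Type*} [SkewBrace B] [SkewBrace C] [SkewBrace D]
variable {f : BraceHom B C} {g : BraceHom C D} {I J : BraceIdeal B} {x : B}

theorem BraceHom.neg_add_mem_iff (hfI : ∀ b, f b = 0 ↔ b ∈ I.carrier) {a b : B} :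
    -a + b ∈ I.carrier ↔ f a = f b := by
  rw [← hfI, map_add, map_neg, neg_add_eq_zero]

theorem IsCyclicExt.of_factor (hf : Function.Surjective f) (hfI : ∀ b, f b = 0 ↔ b ∈ I.carrier)
    (hg : Function.Surjective g) (hgJ : ∀ b, g (f b) = 0 ↔ b ∈ J.carrier) (hx : x ∈ J.carrier)
    (hgen : ∀ y ∈ J.carrier, ∃ n : ℤ, -(n • x) + y ∈ I.carrier) : IsCyclicExt g (f x) :=
  .of_comp hf hg ((hgJ x).2 hx) fun y hy => by
    obtain ⟨n, hn⟩ := hgen y ((hgJ y).1 hy)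
    exact ⟨n, by rw [← map_zsmul, (BraceHom.neg_add_mem_iff hfI).1 hn]⟩

theorem BraceHom.map_mem_socle_of_memSocQuot (hf : Function.Surjective f)
    (hfI : ∀ b, f b = 0 ↔ b ∈ I.carrier) (hx : MemSocQuot I.carrier x) : f x ∈ socle C := by
  refine mem_socle_iff.2 ⟨hf.forall.2 fun b => ?_, hf.forall.2 fun b => ?_⟩
  · rw [← map_lam, ← (neg_add_mem_iff hfI).1 (hx.2.1 b trivial)]
  · have h := (neg_add_mem_iff hfI).1 (hx.2.2 b trivial)
    rw [map_add, map_add] at h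
    exact h.symm

theorem IsInfSocleExt.exists_of_factor (hf : Function.Surjective f)
    (hfI : ∀ b, f b = 0 ↔ b ∈ I.carrier) (hg : Function.Surjective g)
    (hgJ : ∀ b, g (f b) = 0 ↔ b ∈ J.carrier) (hIJ : QuotAddInfCyclic I.carrier J.carrier)
    (hsoc : ∀ x ∈ J.carrier, MemSocQuot I.carrier x) : ∃ y, IsInfSocleExt g y := by
  obtain ⟨x, hx, hgen, hinf⟩ := hIJ
  refine ⟨f x, { IsCyclicExt.of_factor hf hfI hg hgJ hx hgen with
    mem_socle := BraceHom.map_mem_socle_of_memSocQuot hf hfI (hsoc x hx)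
    addOrderOf_eq_zero := ?_ }⟩
  have h := hinf (addOrderOf (f x)) <| (hfI _).1 <| by
    rw [map_zsmul, natCast_zsmul, addOrderOf_nsmul_eq_zero]
  exact_mod_cast h

theorem IsCyclicExt.exists_of_factor {p : ℕ} (hf : Function.Surjective f)
    (hfI : ∀ b, f b = 0 ↔ b ∈ I.carrier) (hg : Function.Surjective g)
    (hgJ : ∀ b, g (f b) = 0 ↔ b ∈ J.carrier) (hIJ : QuotPrimeOrder I.carrier J.carrier p) :
    ∃ y, IsCyclicExt g y ∧ addOrderOf y = p := by
  obtain ⟨hp, x, hx, hxI, hpx, hgen⟩ := hIJ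
  have : Fact p.Prime := ⟨hp⟩
  exact ⟨f x, .of_factor hf hfI hg hgJ hx hgen, addOrderOf_eq_prime
    (by rw [← map_nsmul, hfI]; exact hpx) (by rwa [Ne, hfI])⟩

end Factor

section Supersoluble

variable {B C : Type u} [SkewBrace B] [SkewBrace C] {f : BraceHom B C} {I J : BraceIdeal B}

theorem HasOddTwoSeries.of_factor (hf : Function.Surjective f)
    (hfI : ∀ b, f b = 0 ↔ b ∈ I.carrier) (hIJ : I.carrier ⊆ J.carrier)
    (hfac : (QuotAddInfCyclic I.carrier J.carrier ∧ ∀ x ∈ J.carrier, MemSocQuot I.carrier x) ∨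
      ∃ p : ℕ, QuotPrimeOrder I.carrier J.carrier p)
    (hJ : HasOddTwoSeries (B ⧸ J)) : HasOddTwoSeries C := by
  obtain ⟨g, hg⟩ := BraceHom.exists_comp_eq_of_ker_le hf (g := J.quotientMap)
    fun b hb => J.quotientMap_eq_zero_iff.2 (hIJ ((hfI b).1 hb))
  have hgJ (b : B) : g (f b) = 0 ↔ b ∈ J.carrier := by rw [hg, J.quotientMap_eq_zero_iff]
  have hgs : Function.Surjective g := by
    refine Function.Surjective.of_comp (g := f) ?_
    rw [show g ∘ f = J.quotientMap from funext hg]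
    exact J.quotientMap_surjective
  rcases hfac with ⟨hinf, hsoc⟩ | ⟨p, hp⟩
  · obtain ⟨y, hy⟩ := IsInfSocleExt.exists_of_factor hf hfI hgs hgJ hinf hsoc
    exact .infinite hy hJ
  · obtain ⟨y, hy, hyp⟩ := IsCyclicExt.exists_of_factor hf hfI hgs hgJ hp
    exact .prime hy (hyp ▸ hp.1) hJ

theorem IsSupersoluble.hasOddTwoSeries (hB : IsSupersoluble B) : HasOddTwoSeries B := by
  obtain ⟨n, I, hI0, hIn, hle, hfac⟩ := hB
  have key (i : ℕ) (hi : i ≤ n) : ∀ (C : Type u) [SkewBrace C] (f : BraceHom B C),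
      Function.Surjective f → (∀ b, f b = 0 ↔ b ∈ (I i).carrier) → HasOddTwoSeries C := by
    induction hi using Nat.decreasingInduction with
    | self =>
      intro C _ f hf hfI
      have hC (c : C) : c = 0 := by
        obtain ⟨b, rfl⟩ := hf c
        exact (hfI b).2 (hIn ▸ trivial)
      have : Subsingleton C := ⟨fun a b => (hC a).trans (hC b).symm⟩
      exact .of_hasTwoSeries .of_subsingleton
    | of_succ i hi ih =>
      intro C _ f hf hfI
      exact .of_factor hf hfI (hle i hi) (hfac i hi) (ih (B ⧸ I (i + 1)) _
        (I (i + 1)).quotientMap_surjective fun _ => (I (i + 1)).quotientMap_eq_zero_iff)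
  exact key 0 n.zero_le B (BraceHom.id B) Function.surjective_id fun _ => by rw [hI0]; rfl

end Supersoluble

section InfiniteFactors

variable {B : Type u} {C D : Type*} [SkewBrace B] [SkewBrace C] [SkewBrace D]
variable {f : BraceHom B C} {g : BraceHom C D} {x t : B}

namespace IsInfSocleExt

theorem zsmul_mem_zmultiples_nsmul_iff (hf : IsInfSocleExt f x) {m : ℕ} {k : ℤ} :
    k • x ∈ AddSubgroup.zmultiples (m • x) ↔ (m : ℤ) ∣ k := by
  refine ⟨fun ⟨n, hn⟩ => ⟨n, ?_⟩, fun ⟨n, hn⟩ => ⟨n, ?_⟩⟩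
  · have h : (k - m * n) • x = 0 := by
      rw [sub_zsmul, ← hn, mul_comm, mul_zsmul, natCast_zsmul, add_neg_cancel]
    exact sub_eq_zero.1 (hf.eq_zero_of_zsmul_eq_zero h)
  · change n • m • x = k • x
    rw [hn, mul_comm, mul_zsmul, natCast_zsmul]

theorem exists_ideal_eq_zmultiples_nsmul (hf : IsInfSocleExt f x) (m : ℕ) :
    ∃ T : BraceIdeal B, T.addSubgroup = AddSubgroup.zmultiples (m • x) := by
  refine ⟨.ofLeSocle _ (AddSubgroup.zmultiples_le_of_mem (nsmul_mem hf.mem_socle m)) ?_, rfl⟩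
  rintro b _ ⟨n, rfl⟩
  obtain ⟨i, hi⟩ := hf.exists_lam_eq_zsmul b
  have h : lam b (n • m • x) = (n * (m * i)) • x := by
    rw [lam_zsmul, lam_nsmul, ← hi, mul_zsmul, mul_zsmul, natCast_zsmul]
  rw [h]
  exact hf.zsmul_mem_zmultiples_nsmul_iff.2 ⟨n * i, by ring⟩

theorem exists_nsmul (hf : IsInfSocleExt f x) {m : ℕ} (hm : m ≠ 0) :
    ∃ (E : Type u) (_ : SkewBrace E) (q : BraceHom B E) (h : BraceHom E C),
      IsInfSocleExt q (m • x) ∧ IsCyclicExt h (q x) ∧ addOrderOf (q x) = m := by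
  obtain ⟨T, hT⟩ := hf.exists_ideal_eq_zmultiples_nsmul m
  have hq : IsCyclicExt T.quotientMap (m • x) := .quotientMap hT
  obtain ⟨h, hh⟩ := BraceHom.exists_comp_eq_of_ker_le hq.surjective (g := f) fun b hb => by
    obtain ⟨n, rfl⟩ := hq.exists_zsmul_eq hb
    rw [map_zsmul, map_nsmul, hf.map_self, nsmul_zero, zsmul_zero]
  refine ⟨_, _, T.quotientMap, h, ⟨hq, nsmul_mem hf.mem_socle m, ?_⟩, .of_comp hq.surjective
    ?_ (by rw [hh, hf.map_self]) fun y hy => ?_, Nat.dvd_right_iff_eq.1 fun k => ?_⟩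
  · rw [addOrderOf_nsmul' x hm, hf.addOrderOf_eq_zero, Nat.zero_div]
  · refine Function.Surjective.of_comp (g := T.quotientMap) ?_
    rw [show h ∘ T.quotientMap = f from funext hh]
    exact hf.surjective
  · obtain ⟨n, rfl⟩ := hf.exists_zsmul_eq ((hh y).symm.trans hy)
    exact ⟨n, map_zsmul _ _ _⟩
  · rw [addOrderOf_dvd_iff_nsmul_eq_zero, ← map_nsmul, hq.map_eq_zero_iff, ← natCast_zsmul x k,
      hf.zsmul_mem_zmultiples_nsmul_iff, Int.natCast_dvd_natCast]

end IsInfSocleExt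

namespace IsCyclicExt

variable (hf : IsCyclicExt f x) (hx : addOrderOf x = 2)
include hf hx

theorem two_nsmul_eq_of_map_eq {a b : B} (hab : f a = f b) : 2 • a = 2 • b := by
  have hj : f (-b + a) = 0 := by rw [map_add, map_neg, hab, neg_add_cancel]
  have hj2 : 2 • (-b + a) = 0 := hx ▸ hf.nsmul_eq_zero_of_map_eq_zero hj
  calc 2 • a = 2 • (b + (-b + a)) := by rw [add_neg_cancel_left]
    _ = 2 • b := by rw [(hf.addCommute hx hj b).symm.add_nsmul, hj2, add_zero]

theorem sq_lam (ht : f t ∈ socle C) (b : B) : lam (t ^ 2) b = b := by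
  have hj : f (-b + lam t b) = 0 := by
    rw [map_add, map_neg, BraceHom.map_lam, lam_of_mem_socle ht, neg_add_cancel]
  rw [pow_lam_of_lam_eq_add (add_neg_cancel_left b _).symm (hf.lam_eq_self hx hj t)]
  have hj2 : 2 • (-b + lam t b) = 0 := hx ▸ hf.nsmul_eq_zero_of_map_eq_zero hj
  rw [hj2, add_zero]

theorem addCommute_two_nsmul (ht : f t ∈ socle C) (b : B) : AddCommute (2 • t) b := by
  have h : b + 2 • t + -b = 2 • t := by
    rw [← addConj_nsmul]
    refine hf.two_nsmul_eq_of_map_eq hx ?_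
    rw [map_add, map_add, map_neg, ← addCommute_of_mem_socle ht, add_neg_cancel_right]
  exact (add_neg_eq_iff_eq_add.1 h).symm

theorem sq_two_nsmul (ht : f t ∈ socle C) : (2 • t) ^ 2 = 4 • t := by
  have hft : f (2 • t) ∈ socle C := by
    rw [map_nsmul]
    exact nsmul_mem ht 2
  have h : lam (2 • t) (2 • t) = 2 • t := by
    rw [lam_nsmul]
    refine hf.two_nsmul_eq_of_map_eq hx ?_
    rw [BraceHom.map_lam, lam_of_mem_socle hft]
  rw [sq, mul_eq_add_lam, h, ← add_nsmul]

theorem four_nsmul_mem_socle (ht : f t ∈ socle C) : 4 • t ∈ socle B := by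
  refine mem_socle_iff.2 ⟨fun b => ?_, fun b => ?_⟩
  · have hft : f (2 • t) ∈ socle C := by
      rw [map_nsmul]
      exact nsmul_mem ht 2
    rw [← hf.sq_two_nsmul hx ht, hf.sq_lam hx hft]
  · rw [show 4 = 2 * 2 from rfl, mul_nsmul]
    exact (hf.addCommute_two_nsmul hx ht b).nsmul_left 2

theorem exists_ideal_eq_zmultiples_four_nsmul (hg : IsInfSocleExt g (f t)) :
    ∃ T : BraceIdeal B, T.addSubgroup = AddSubgroup.zmultiples (4 • t) := by
  refine ⟨.ofLeSocle _ (AddSubgroup.zmultiples_le_of_mem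
    (hf.four_nsmul_mem_socle hx hg.mem_socle)) ?_, rfl⟩
  rintro b _ ⟨n, rfl⟩
  obtain ⟨i, hi⟩ := hg.exists_lam_eq_zsmul (f b)
  have h2 : 2 • lam b t = 2 • i • t := hf.two_nsmul_eq_of_map_eq hx <| by
    rw [BraceHom.map_lam, ← hi, map_zsmul]
  have h4 : 4 • lam b t = i • 4 • t := by
    rw [show 4 = 2 * 2 from rfl, mul_nsmul, h2, ← mul_nsmul, ← natCast_zsmul, zsmul_comm,
      natCast_zsmul]
  change lam b (n • 4 • t) ∈ _
  rw [lam_zsmul, lam_nsmul, h4]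
  exact zsmul_mem (AddSubgroup.zsmul_mem_zmultiples _ i) n

end IsCyclicExt

end InfiniteFactors

section TwoSeries

variable {B C D : Type u} [SkewBrace B] [SkewBrace C] [SkewBrace D]
variable {f : BraceHom B C} {g : BraceHom C D} {x t : B} {n : ℕ}

theorem IsInfSocleExt.exists_four_nsmul (hf : IsInfSocleExt f x) (hC : HasTwoSeries n C) :
    ∃ (E : Type u) (_ : SkewBrace E) (q : BraceHom B E),
      IsInfSocleExt q (4 • x) ∧ HasTwoSeries n E := by
  obtain ⟨E, _, q, h, hq, hh, hqx⟩ := hf.exists_nsmul two_ne_zero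
  obtain ⟨E', _, q', h', hq', hh', hqx'⟩ := hq.exists_nsmul two_ne_zero
  rw [← mul_nsmul'] at hq'
  exact ⟨E', _, q', hq', .two hh' hqx' (.two hh hqx hC)⟩

theorem IsCyclicExt.exists_infinite_below_two (hf : IsCyclicExt f x)
    (hx : addOrderOf x = 2) (hg : IsInfSocleExt g (f t)) (hD : HasTwoSeries n D) :
    ∃ (E : Type u) (_ : SkewBrace E) (q : BraceHom B E) (z : B),
      IsInfSocleExt q z ∧ HasTwoSeries n E := by
  obtain ⟨E, _, g', hg', hE⟩ := hg.exists_four_nsmul hD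
  rw [← map_nsmul] at hg'
  obtain ⟨T, hT⟩ := hf.exists_ideal_eq_zmultiples_four_nsmul hx hg
  have h0 : addOrderOf (4 • t) = 0 := by
    have hdvd := addOrderOf_map_dvd (f : B →+ C) (4 • t)
    rwa [AddMonoidHom.coe_coe, hg'.addOrderOf_eq_zero, zero_dvd_iff] at hdvd
  have hTf (b : B) (hb : b ∈ T.carrier) (hb0 : f b = 0) : b = 0 := by
    obtain ⟨n, rfl⟩ : b ∈ AddSubgroup.zmultiples (4 • t) := hT ▸ hb
    change f (n • 4 • t) = 0 at hb0
    rw [map_zsmul] at hb0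
    change n • 4 • t = 0
    rw [hg'.eq_zero_of_zsmul_eq_zero hb0, zero_zsmul]
  obtain ⟨h, hh, hqx⟩ := hf.exists_swap_of_ideal hT hTf hg'.toIsCyclicExt
  exact ⟨_, _, T.quotientMap, 4 • t,
    ⟨.quotientMap hT, hf.four_nsmul_mem_socle hx hg.mem_socle, h0⟩, .two hh (hqx.trans hx) hE⟩

theorem HasTwoSeries.exists_isInfSocleExt (hB : HasTwoSeries (n + 1) B) :
    ∃ (C : Type u) (_ : SkewBrace C) (f : BraceHom B C) (x : B),
      IsInfSocleExt f x ∧ HasTwoSeries n C := by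
  generalize hm : n + 1 = m at hB
  induction hB with
  | of_subsingleton => lia
  | two hf hx _ ih =>
    obtain ⟨C, _, g, y, hg, hC⟩ := ih hm
    obtain ⟨t, rfl⟩ := hf.surjective y
    exact hf.exists_infinite_below_two hx hg hC
  | infinite hf hC =>
    obtain rfl := Nat.succ_injective hm
    exact ⟨_, _, _, _, hf, hC⟩

end TwoSeries

section TwoPowerIndex

variable {B : Type u} {C : Type*} [SkewBrace B] [SkewBrace C] {f : BraceHom B C} {x : B} {n : ℕ}

/-- The ideal `I` has finite index in `B`, and this index is a power of `2`. -/
def HasTwoPowerIndex (I : BraceIdeal B) : Prop := ∃ k, I.addSubgroup.index = 2 ^ k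

theorem HasTwoPowerIndex.comap {I : BraceIdeal C} (hI : HasTwoPowerIndex I)
    (hf : Function.Surjective f) : HasTwoPowerIndex (f.comap I) := by
  obtain ⟨k, hk⟩ := hI
  exact ⟨k, (I.addSubgroup.index_comap_of_surjective (f := (f : B →+ C)) hf).trans hk⟩

theorem HasTwoPowerIndex.inf {I J : BraceIdeal B} (hI : HasTwoPowerIndex I)
    (hJ : HasTwoPowerIndex J) : HasTwoPowerIndex (I ⊓ J) := by
  obtain ⟨k, hk⟩ := hI
  obtain ⟨m, hm⟩ := hJ
  have hdvd := AddSubgroup.relIndex_dvd_index_of_normal I.addSubgroup J.addSubgroup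
  obtain ⟨r, -, hr⟩ := (Nat.dvd_prime_pow Nat.prime_two).1 (hk ▸ hdvd)
  refine ⟨r + m, ?_⟩
  change (I.addSubgroup ⊓ J.addSubgroup).index = _
  rw [← AddSubgroup.relIndex_mul_index inf_le_right, AddSubgroup.inf_relIndex_right, hr, hm,
    pow_add]

theorem IsCyclicExt.card_eq (hf : IsCyclicExt f x) :
    Nat.card B = addOrderOf x * Nat.card C := by
  rw [← hf.card_ker, ← Subgroup.card_mul_index (MonoidHom.ker (f : B →* C)), Subgroup.index_ker,
    (MonoidHom.range_eq_top (f := (f : B →* C))).2 hf.surjective, Subgroup.card_top]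

theorem HasTwoSeries.exists_card_eq_two_pow (hB : HasTwoSeries 0 B) : ∃ k, Nat.card B = 2 ^ k := by
  generalize hm : 0 = m at hB
  induction hB with
  | @of_subsingleton B => exact ⟨0, Nat.card_of_subsingleton (0 : B)⟩
  | two hf hx _ ih =>
    obtain ⟨k, hk⟩ := ih hm
    exact ⟨k + 1, by rw [hf.card_eq, hx, hk, pow_succ']⟩
  | infinite => lia

theorem HasTwoSeries.hasTwoPowerIndex_bot (hB : HasTwoSeries 0 B) :
    HasTwoPowerIndex (⊥ : BraceIdeal B) := by
  obtain ⟨k, hk⟩ := hB.exists_card_eq_two_pow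
  exact ⟨k, AddSubgroup.index_bot.trans hk⟩

theorem IsInfSocleExt.ker_le_of_sq_mem {q : BraceHom B C} (hq : IsInfSocleExt q (2 • x))
    (hx : x ∈ socle B) {H : Subgroup B} (hH : ∀ b, b ^ 2 ∈ H) : MonoidHom.ker (q : B →* C) ≤ H := by
  intro b hb
  rw [MonoidHom.mem_ker, one_eq_zero] at hb
  obtain ⟨n, rfl⟩ := hq.exists_zsmul_eq hb
  rw [← natCast_zsmul, zsmul_comm, natCast_zsmul,
    ← pow_eq_nsmul_of_mem_socle (zsmul_mem hx n)]
  exact hH _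

/-- In an infinite factor of the socle twice an element is its square, so dividing out the double
of a generator does not affect `H` and trades the factor for one of order `2`. -/
theorem HasTwoSeries.exists_hasTwoPowerIndex_le (hB : HasTwoSeries n B) {H : Subgroup B}
    (hH : ∀ b, b ^ 2 ∈ H) : ∃ I : BraceIdeal B, HasTwoPowerIndex I ∧ I.subgroup ≤ H := by
  induction n generalizing B with
  | zero =>
    refine ⟨⊥, hB.hasTwoPowerIndex_bot, fun b hb => ?_⟩
    rw [show b = 1 from AddSubgroup.mem_bot.1 hb |>.trans one_eq_zero.symm]
    exact H.one_mem
  | succ n ih =>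
    obtain ⟨C, _, f, x, hf, hC⟩ := hB.exists_isInfSocleExt
    obtain ⟨E, _, q, h, hq, hh, hqx⟩ := hf.exists_nsmul two_ne_zero
    obtain ⟨I, hI, hIH⟩ := ih (.two hh hqx hC) (H := H.map (q : B →* E)) <|
      hq.surjective.forall.2 fun b => ⟨b ^ 2, hH b, map_pow q b 2⟩
    refine ⟨q.comap I, hI.comap hq.surjective, ?_⟩
    rw [← Subgroup.comap_map_eq_self (hq.ker_le_of_sq_mem hf.mem_socle hH)]
    exact Subgroup.comap_mono hIH

end TwoPowerIndex

section CentrallyNilpotent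

variable {B : Type u} {C : Type*} [SkewBrace B] [SkewBrace C] {f : BraceHom B C} {n : ℕ}

theorem isBCentrallyNilpotent_bot : IsBCentrallyNilpotent (⊥ : BraceIdeal B) :=
  ⟨0, fun _ => ⊥, rfl, rfl, fun _ hj => absurd hj (Nat.not_lt_zero _),
    fun _ hj => absurd hj (Nat.not_lt_zero _)⟩

theorem memZetaQuotRel_zero_of_mem_socle {I : Set B} {z : B} (hz : z ∈ socle B) (hzI : z ∈ I)
    (hlam : ∀ b ∈ I, lam b z = z) : MemZetaQuotRel I {0} z := by
  refine ⟨⟨hzI, fun b _ => ?_, fun b _ => ?_⟩, fun b hb => ?_⟩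
  · exact neg_add_eq_zero.2 (lam_of_mem_socle hz b).symm
  · exact neg_add_eq_zero.2 (addCommute_of_mem_socle hz b).symm
  · exact (inv_mul_eq_one.2 (commute_of_mem_socle_of_lam_eq hz (hlam b hb))).trans one_eq_zero

theorem MemZetaQuotRel.comap_inf {I J : BraceIdeal C} {E : BraceIdeal B} {z : B}
    (hz : MemZetaQuotRel I.carrier J.carrier (f z)) (hzE : z ∈ E.carrier) :
    MemZetaQuotRel (f.comap I ⊓ E).carrier (f.comap J ⊓ E).carrier z := by
  refine ⟨⟨⟨hz.1.1, hzE⟩, fun b hb => ⟨?_, E.add_mem (E.neg_mem hb.2) (E.lam_mem z hb.2)⟩,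
    fun b hb => ⟨?_, E.add_mem (E.neg_mem (E.add_mem hb.2 hzE)) (E.add_mem hzE hb.2)⟩⟩,
    fun b hb => ⟨?_, E.mul_mem (E.inv_mem (E.mul_mem hb.2 hzE)) (E.mul_mem hzE hb.2)⟩⟩
  · change f (-b + lam z b) ∈ J.carrier
    rw [map_add, map_neg, BraceHom.map_lam]
    exact hz.1.2.1 _ hb.1
  · change f (-(b + z) + (z + b)) ∈ J.carrier
    rw [map_add, map_neg, map_add, map_add]
    exact hz.1.2.2 _ hb.1
  · change f ((b * z)⁻¹ * (z * b)) ∈ J.carrier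
    rw [map_mul, map_inv, map_mul, map_mul]
    exact hz.2 _ hb.1

theorem IsBCentrallyNilpotent.comap_inf {I : BraceIdeal C} (hI : IsBCentrallyNilpotent I)
    {E : BraceIdeal B} (hker : ∀ z, f z = 0 → z ∈ socle B)
    (hE : ∀ b ∈ E.carrier, ∀ z, f z = 0 → lam b z = z) :
    IsBCentrallyNilpotent (f.comap I ⊓ E) := by
  obtain ⟨n, J, hJ0, hJn, hle, hJ⟩ := hI
  refine ⟨n + 1, fun | 0 => ⊥ | i + 1 => f.comap (J i) ⊓ E, rfl, ?_, ?_, ?_⟩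
  · change {b | f b ∈ (J n).carrier} ∩ E.carrier = {b | f b ∈ I.carrier} ∩ E.carrier
    rw [hJn]
  · rintro (_ | j) hj b hb
    · obtain rfl : b = 0 := hb
      exact (f.comap (J 0) ⊓ E).zero_mem
    · exact ⟨hle j (Nat.lt_of_succ_lt_succ hj) hb.1, hb.2⟩
  · rintro (_ | j) hj z ⟨hz, hzE⟩
    · have hz0 : f z = 0 := (hJ0 ▸ hz : f z ∈ ({0} : Set C))
      have hzI : f z ∈ I.carrier := hz0 ▸ I.zero_mem
      exact memZetaQuotRel_zero_of_mem_socle (hker z hz0) ⟨hzI, hzE⟩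
        fun b hb => hE b hb.2 z hz0
    · exact (hJ j (Nat.lt_of_succ_lt_succ hj) _ hz).comap_inf hzE

theorem HasTwoSeries.exists_isBCentrallyNilpotent (hB : HasTwoSeries n B) :
    ∃ I : BraceIdeal B, HasTwoPowerIndex I ∧ IsBCentrallyNilpotent I := by
  induction n generalizing B with
  | zero => exact ⟨⊥, hB.hasTwoPowerIndex_bot, isBCentrallyNilpotent_bot⟩
  | succ n ih =>
    obtain ⟨C, _, f, x, hf, hC⟩ := hB.exists_isInfSocleExt
    obtain ⟨I, hI, hInil⟩ := ih hC
    obtain ⟨E, hE, hEx⟩ := hB.exists_hasTwoPowerIndex_le hf.sq_mem_lamStabilizer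
    refine ⟨f.comap I ⊓ E, (hI.comap hf.surjective).inf hE,
      hInil.comap_inf (fun _ => hf.mem_socle_of_map_eq_zero) fun b hb z hz => ?_⟩
    obtain ⟨n, rfl⟩ := hf.exists_zsmul_eq hz
    rw [lam_zsmul, mem_lamStabilizer.1 (hEx hb)]

theorem IsBCentrallyNilpotent.addSubgroup_le_fitAdd {I : BraceIdeal B}
    (hI : IsBCentrallyNilpotent I) : I.addSubgroup ≤ fitAdd B := fun _ hb =>
  AddSubgroup.subset_closure (Set.mem_biUnion (x := I) hI hb)

theorem addOrderOf_eq_two_of_prime {A : Type*} [AddMonoid A] {x : A}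
    (h2 : {x : A | addOrderOf x ≠ 0 ∧ ∀ q : ℕ, q.Prime → q ∣ addOrderOf x → 2 < q} = {0})
    (hx : (addOrderOf x).Prime) : addOrderOf x = 2 := by
  by_contra hne
  have hx0 : x ∈ ({0} : Set A) := h2 ▸ ⟨hx.ne_zero, fun q hq hdvd => by
    rw [(Nat.prime_dvd_prime_iff_eq hq hx).1 hdvd]
    exact lt_of_le_of_ne hx.two_le (Ne.symm hne)⟩
  exact hx.ne_one (AddMonoid.addOrderOf_eq_one_iff.2 hx0)

end CentrallyNilpotent

end SkewBrace

namespace SkewBrace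

/-- Let `B` be a supersoluble brace such that `U_2^+(B) = {0}`, i.e. `(B,+)` has no
nonzero element of finite odd order. Then `B/Fit(B)` is finite of order a power
of `2`. -/
theorem quotient_fitting_two_power (B : Type*) [SkewBrace B] (hB : IsSupersoluble B)
    (h2 : {x : B | addOrderOf x ≠ 0 ∧
      ∀ q : ℕ, q.Prime → q ∣ addOrderOf x → 2 < q} = {0}) :
    ∃ k : ℕ, Nat.card (B ⧸ fitAdd B) = 2 ^ k := by
  obtain ⟨n, hn⟩ := hB.hasOddTwoSeries.exists_hasTwoSeries fun _ => addOrderOf_eq_two_of_prime h2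
  obtain ⟨I, ⟨k, hk⟩, hI⟩ := hn.exists_isBCentrallyNilpotent
  have hdvd := AddSubgroup.index_dvd_of_le hI.addSubgroup_le_fitAdd
  obtain ⟨m, -, hm⟩ := (Nat.dvd_prime_pow Nat.prime_two).1 (hk ▸ hdvd)
  exact ⟨m, hm⟩

end SkewBrace
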